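/- For every outerpath Z=(V,E_Z) on n ≥ 4 vertices and every matching M=(V,E_M) on the same vertex set V, there exists a RacSim drawing of Z and M on an integer grid of size (3n−2)×(3n−2) in which every edge of the outerpath is drawn with at most two bends and every edge of the matching is drawn with at most one bend. -/

import Mathlib

open SimpleGraph

/-- A polyline with `n` straight-line segments, given by its `n + 1` corner points. -/
structure Polyline where
  n : ℕ
  pts : Fin (n + 1) → ℝ × ℝ

namespace Polyline

/-- The first point of a polyline. -/
def first (P : Polyline) : ℝ × ℝ := P.pts 0

/-- The last point of a polyline. -/
def last (P : Polyline) : ℝ × ℝ := P.pts (Fin.last P.n)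

/-- The segments of a polyline, as ordered pairs of endpoints. -/
def segs (P : Polyline) : Set ((ℝ × ℝ) × (ℝ × ℝ)) :=
  {s | ∃ i : Fin P.n, s = (P.pts i.castSucc, P.pts i.succ)}

/-- The set of points covered by a polyline. -/
def curve (P : Polyline) : Set (ℝ × ℝ) :=
  ⋃ i : Fin P.n, segment ℝ (P.pts i.castSucc) (P.pts i.succ)

end Polyline

/-- Two segments are perpendicular: their direction vectors have zero dot product. -/
def SegPerp (s t : (ℝ × ℝ) × (ℝ × ℝ)) : Prop :=
  (s.2.1 - s.1.1) * (t.2.1 - t.1.1) + (s.2.2 - s.1.2) * (t.2.2 - t.1.2) = 0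

/-- Two segments cross: their relative interiors meet. -/
def SegCross (s t : (ℝ × ℝ) × (ℝ × ℝ)) : Prop :=
  (openSegment ℝ s.1 s.2 ∩ openSegment ℝ t.1 t.2).Nonempty

/-- A point has integer coordinates lying in `{1, …, a} × {1, …, b}`. -/
def OnGridPt (a b : ℤ) (p : ℝ × ℝ) : Prop :=
  ∃ x y : ℤ, p = ((x : ℝ), (y : ℝ)) ∧ 1 ≤ x ∧ x ≤ a ∧ 1 ≤ y ∧ y ≤ b

/-- A simultaneous polyline drawing of the graphs `G 0, …, G (m - 1)` on a common
vertex set `V`: an injective placement of the vertices in the plane together with,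
for each graph and each of its edges, a polyline joining the placements of the two
endpoints of the edge. -/
structure SimDrawing {V : Type} {m : ℕ} (G : Fin m → SimpleGraph V) where
  pos : V → ℝ × ℝ
  pos_injective : Function.Injective pos
  poly : Fin m → Sym2 V → Polyline
  joins : ∀ (i : Fin m) (a b : V), (G i).Adj a b →
    ((poly i s(a, b)).first = pos a ∧ (poly i s(a, b)).last = pos b) ∨
    ((poly i s(a, b)).first = pos b ∧ (poly i s(a, b)).last = pos a)

namespace SimDrawing

variable {V : Type} {m : ℕ} {G : Fin m → SimpleGraph V} (D : SimDrawing G)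

/-- (i) Each graph is drawn planar: the polylines of two distinct edges of the same
graph intersect only in points representing common endpoints. -/
def PlanarEach : Prop :=
  ∀ i : Fin m, ∀ e ∈ (G i).edgeSet, ∀ e' ∈ (G i).edgeSet, e ≠ e' →
    (D.poly i e).curve ∩ (D.poly i e').curve ⊆
      {p | ∃ v : V, v ∈ e ∧ v ∈ e' ∧ p = D.pos v}

/-- (ii) No two segments belonging to distinct edges overlap in more than one point. -/
def NoOverlaps : Prop :=
  ∀ i : Fin m, ∀ e ∈ (G i).edgeSet, ∀ j : Fin m, ∀ e' ∈ (G j).edgeSet,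
    (i ≠ j ∨ e ≠ e') →
      ∀ s ∈ (D.poly i e).segs, ∀ t ∈ (D.poly j e').segs,
        (segment ℝ s.1 s.2 ∩ segment ℝ t.1 t.2).Subsingleton

/-- (iii) Whenever segments of edges of two different graphs cross, they are
perpendicular at the crossing point. -/
def RightAngleCrossings : Prop :=
  ∀ i j : Fin m, i ≠ j → ∀ e ∈ (G i).edgeSet, ∀ e' ∈ (G j).edgeSet,
    ∀ s ∈ (D.poly i e).segs, ∀ t ∈ (D.poly j e').segs, SegCross s t → SegPerp s t

/-- A RacSim (RAC simultaneous) drawing: conditions (i), (ii) and (iii). -/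
def IsRacSim : Prop :=
  D.PlanarEach ∧ D.NoOverlaps ∧ D.RightAngleCrossings

/-- All vertex points and all corner points (hence all segment endpoints) of the
drawing lie on the integer grid `{1, …, a} × {1, …, b}`. -/
def OnGrid (a b : ℤ) : Prop :=
  (∀ v : V, OnGridPt a b (D.pos v)) ∧
    ∀ i : Fin m, ∀ e ∈ (G i).edgeSet, ∀ k : Fin ((D.poly i e).n + 1),
      OnGridPt a b ((D.poly i e).pts k)

/-- Every edge of the `i`-th graph is drawn with at most `k` bends, i.e. its
polyline consists of at most `k + 1` segments. -/
def BendsAtMost (i : Fin m) (k : ℕ) : Prop :=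
  ∀ e ∈ (G i).edgeSet, (D.poly i e).n ≤ k + 1

end SimDrawing

/-- The degree of a vertex of a graph. -/
noncomputable def vdeg {V : Type} (G : SimpleGraph V) (v : V) : ℕ := (G.neighborSet v).ncard

/-- Adjacency along the Hamiltonian cycle `0 → 1 → ⋯ → (n-1) → 0` on `Fin n`. -/
def CycAdj (n : ℕ) (a b : Fin n) : Prop :=
  b.val = (a.val + 1) % n ∨ a.val = (b.val + 1) % n

/-- The cyclic position of `x` relative to `a` on `Fin n`. -/
def RelPos (n : ℕ) (a x : Fin n) : ℕ := (x.val + n - a.val) % n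

/-- `x` lies strictly between `a` and `b` in the cyclic order of `Fin n`. -/
def CyclicBtw (n : ℕ) (a x b : Fin n) : Prop :=
  RelPos n a x ≠ 0 ∧ RelPos n a x < RelPos n a b

/-- Chords `{a, b}` and `{c, d}` (with pairwise distinct endpoints) cross: exactly
one of `c`, `d` lies strictly between `a` and `b` in the cyclic order. -/
def ChordsCross (n : ℕ) (a b c d : Fin n) : Prop :=
  (CyclicBtw n a c b ∧ ¬CyclicBtw n a d b) ∨ (CyclicBtw n a d b ∧ ¬CyclicBtw n a c b)

/-- A maximal outerpath on `Fin n`: the edge set consists of the Hamiltonian cycle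
`0 → 1 → ⋯ → (n-1) → 0` together with `n - 3` chords (so `2n - 3` edges in total)
that are pairwise noncrossing with respect to the cyclic order (a triangulated
polygon), and there are exactly two vertices of degree 2. -/
def IsMaximalOuterpath {n : ℕ} (H : SimpleGraph (Fin n)) : Prop :=
  (∀ a b : Fin n, a ≠ b → CycAdj n a b → H.Adj a b) ∧
  H.edgeSet.ncard = 2 * n - 3 ∧
  (∀ a b c d : Fin n, H.Adj a b → H.Adj c d → ¬CycAdj n a b → ¬CycAdj n c d →
    a ≠ c → a ≠ d → b ≠ c → b ≠ d → ¬ChordsCross n a b c d) ∧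
  {v : Fin n | vdeg H v = 2}.ncard = 2

/-- An outerpath on a vertex set `V` of `n` vertices: a spanning subgraph of a
maximal outerpath, under some labeling of the vertices by `Fin n`. -/
def IsOuterpath {V : Type} (n : ℕ) (Z : SimpleGraph V) : Prop :=
  ∃ (f : Fin n ≃ V) (H : SimpleGraph (Fin n)), IsMaximalOuterpath H ∧
    ∀ a b : Fin n, Z.Adj (f a) (f b) → H.Adj a b

/-- A matching on a vertex set: a graph in which every vertex has degree at most 1. -/
def IsMatchingGraph {V : Type} (M : SimpleGraph V) : Prop :=
  ∀ v : V, vdeg M v ≤ 1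

/-!
Since only two vertices of a maximal outerpath have degree 2, every chord separates them, so the two
arcs of the Hamiltonian cycle between them are two tracks: edges inside a track join consecutive
vertices and edges between the tracks do not cross. Merging the tracks gives a linear order in which
every edge leads from the latest preceding vertex `s` of a track to a vertex `t`. One track is
placed along each axis, in this order. The edge from `s` to `t` starts with a step of height one,
then runs at a right angle to the axis of `s`, and finally enters `t`; the linear order makes these
curves disjoint.

The distances of the vertices from the axes are still free. Reserving a level for each matching edge
makes it horizontal or vertical if its endpoints are on the same track, and an L-shape otherwise.
All levels lie beyond the area in which outerpath edges are parallel to them, and a step of height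
one between grid lines crosses no level.
-/

/-! ### Cyclic positions -/

section RelPos

variable {n : ℕ}

theorem relPos_eq (a x : Fin n) :
    RelPos n a x = if a.val ≤ x.val then x.val - a.val else x.val + n - a.val := by
  unfold RelPos
  split_ifs with h
  · rw [show x.val + n - a.val = x.val - a.val + n by omega, Nat.add_mod_right,
      Nat.mod_eq_of_lt (by omega)]
  · exact Nat.mod_eq_of_lt (by omega)

@[simp]
theorem relPos_self (p : Fin n) : RelPos n p p = 0 := by
  simp [relPos_eq]

theorem relPos_lt (p a : Fin n) : RelPos n p a < n := by
  rw [relPos_eq]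
  split_ifs <;> omega

theorem relPos_injective (p : Fin n) : Function.Injective (RelPos n p) := by
  intro a b h
  rw [relPos_eq, relPos_eq] at h
  apply Fin.ext
  split_ifs at h <;> omega

theorem exists_relPos_eq (p : Fin n) {j : ℕ} (hj : j < n) : ∃ x, RelPos n p x = j := by
  by_cases h : p.val + j < n
  · exact ⟨⟨p.val + j, h⟩, by rw [relPos_eq]; simp⟩
  · refine ⟨⟨p.val + j - n, by omega⟩, ?_⟩
    rw [relPos_eq]
    dsimp only
    split_ifs <;> omega

theorem relPos_pos_of_ne {p a : Fin n} (h : p ≠ a) : 0 < RelPos n p a :=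
  Nat.pos_of_ne_zero fun h0 => h (relPos_injective p (by rw [relPos_self, h0]))

theorem relPos_add_relPos_swap {p a : Fin n} (h : p ≠ a) : RelPos n p a + RelPos n a p = n := by
  have hval := Fin.val_ne_of_ne h
  rw [relPos_eq, relPos_eq]
  split_ifs <;> omega

theorem val_add_one_mod (a : Fin n) :
    (a.val + 1) % n = if a.val + 1 = n then 0 else a.val + 1 := by
  split_ifs with h
  · rw [h, Nat.mod_self]
  · exact Nat.mod_eq_of_lt (by omega)

theorem cycAdj_iff (p a b : Fin n) :
    CycAdj n a b ↔ RelPos n p b = RelPos n p a + 1 ∨ RelPos n p a = RelPos n p b + 1 ∨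
      (RelPos n p a + 1 = n ∧ RelPos n p b = 0) ∨ (RelPos n p b + 1 = n ∧ RelPos n p a = 0) := by
  unfold CycAdj
  simp only [val_add_one_mod, relPos_eq]
  constructor <;> intro h <;> split_ifs at h ⊢ <;> omega

theorem cyclicBtw_iff_of_lt {p a b : Fin n} (h : RelPos n p a < RelPos n p b) (x : Fin n) :
    CyclicBtw n a x b ↔ RelPos n p a < RelPos n p x ∧ RelPos n p x < RelPos n p b := by
  unfold CyclicBtw
  simp only [relPos_eq] at h ⊢
  constructor <;> intro h' <;> split_ifs at h h' ⊢ <;> omega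

theorem cyclicBtw_iff_of_gt {p a b : Fin n} (h : RelPos n p b < RelPos n p a) (x : Fin n) :
    CyclicBtw n a x b ↔ RelPos n p a < RelPos n p x ∨ RelPos n p x < RelPos n p b := by
  unfold CyclicBtw
  simp only [relPos_eq] at h ⊢
  constructor <;> intro h' <;> split_ifs at h h' ⊢ <;> omega

end RelPos

/-! ### Noncrossing chords of a cycle -/

/-- A Hamiltonian cycle on `Fin n` together with pairwise noncrossing chords, where the number of
chords is left free. -/
structure IsCycleWithChords {n : ℕ} (H : SimpleGraph (Fin n)) : Prop where
  adj_of_cycAdj : ∀ a b, a ≠ b → CycAdj n a b → H.Adj a b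
  not_chordsCross : ∀ a b c d, H.Adj a b → H.Adj c d → ¬CycAdj n a b → ¬CycAdj n c d →
    a ≠ c → a ≠ d → b ≠ c → b ≠ d → ¬ChordsCross n a b c d

theorem IsMaximalOuterpath.isCycleWithChords {n : ℕ} {H : SimpleGraph (Fin n)}
    (hH : IsMaximalOuterpath H) : IsCycleWithChords H :=
  ⟨hH.1, hH.2.2.1⟩

/-- The chords of `H`, as a graph. -/
def chordGraph {n : ℕ} (H : SimpleGraph (Fin n)) : SimpleGraph (Fin n) where
  Adj a b := H.Adj a b ∧ ¬CycAdj n a b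
  symm := ⟨fun _ _ h => ⟨h.1.symm, fun h' => h.2 (Or.symm h')⟩⟩
  loopless := ⟨fun _ h => h.1.ne rfl⟩

namespace IsCycleWithChords

variable {n : ℕ} {H : SimpleGraph (Fin n)}

theorem vdeg_eq_two (hH : IsCycleWithChords H) (hn : 3 ≤ n) {w : Fin n}
    (hw : ∀ d, ¬(chordGraph H).Adj w d) : vdeg H w = 2 := by
  obtain ⟨x, hx⟩ := exists_relPos_eq w (show 1 < n by omega)
  obtain ⟨y, hy⟩ := exists_relPos_eq w (show n - 1 < n by omega)
  have hcyc (d : Fin n) : CycAdj n w d ↔ d = x ∨ d = y := by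
    rw [cycAdj_iff w, relPos_self, ← (relPos_injective w).eq_iff, ← (relPos_injective w).eq_iff,
      hx, hy]
    omega
  have hnbr : H.neighborSet w = {x, y} := by
    ext d
    refine ⟨fun h => (hcyc d).1 (not_not.1 fun h' => hw d ⟨h, h'⟩), fun h => ?_⟩
    refine hH.adj_of_cycAdj w d ?_ ((hcyc d).2 h)
    rintro rfl
    rcases h with rfl | rfl <;> rw [relPos_self] at * <;> omega
  rw [vdeg, hnbr, Set.ncard_pair]
  rintro rfl
  omega

theorem chord_nested (hH : IsCycleWithChords H) {p a b w d : Fin n}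
    (hab : (chordGraph H).Adj a b) (hwd : (chordGraph H).Adj w d)
    (haw : RelPos n p a < RelPos n p w) (hwb : RelPos n p w < RelPos n p b) :
    RelPos n p a ≤ RelPos n p d ∧ RelPos n p d ≤ RelPos n p b := by
  by_contra hout
  have hbtw := cyclicBtw_iff_of_lt (haw.trans hwb)
  refine hH.not_chordsCross a b w d hab.1 hwd.1 hab.2 hwd.2 ?_ ?_ ?_ ?_
    (Or.inl ⟨(hbtw w).2 ⟨haw, hwb⟩, fun h => ?_⟩)
  · rintro rfl; omega
  · rintro rfl; omega
  · rintro rfl; omega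
  · rintro rfl; omega
  · have := (hbtw d).1 h
    omega

/-- The first vertex behind a shortest chord has no chord at all. -/
theorem exists_vdeg_eq_two_between (hH : IsCycleWithChords H) {p a b : Fin n}
    (hab : (chordGraph H).Adj a b) (hlt : RelPos n p a < RelPos n p b) :
    ∃ w, RelPos n p a < RelPos n p w ∧ RelPos n p w < RelPos n p b ∧ vdeg H w = 2 := by
  induction hL : RelPos n p b - RelPos n p a using Nat.strong_induction_on generalizing a b with
  | _ L ih =>
    subst hL
    by_cases hshort : ∃ x y, (chordGraph H).Adj x y ∧ RelPos n p a ≤ RelPos n p x ∧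
        RelPos n p x < RelPos n p y ∧ RelPos n p y ≤ RelPos n p b ∧
        RelPos n p y - RelPos n p x < RelPos n p b - RelPos n p a
    · obtain ⟨x, y, hxy, hax, hxlt, hyb, hlen⟩ := hshort
      obtain ⟨w, hxw, hwy, hw⟩ := ih _ hlen hxy hxlt rfl
      exact ⟨w, by omega, by omega, hw⟩
    · have hbn := relPos_lt p b
      have hnot_succ : RelPos n p b ≠ RelPos n p a + 1 :=
        fun h => hab.2 ((cycAdj_iff p a b).2 (Or.inl h))
      obtain ⟨w, hw⟩ := exists_relPos_eq p (show RelPos n p a + 1 < n by omega)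
      refine ⟨w, by omega, by omega, hH.vdeg_eq_two (by omega) fun d hwd => hshort ?_⟩
      obtain ⟨had, hdb⟩ := hH.chord_nested (p := p) hab hwd (by omega) (by omega)
      rcases Nat.lt_or_gt_of_ne ((relPos_injective p).ne hwd.ne) with h | h
      · exact ⟨w, d, hwd, by omega, h, hdb, by omega⟩
      · exact ⟨d, w, hwd.symm, had, h, by omega, by omega⟩

theorem chord_separates (hH : IsCycleWithChords H) {p q a b : Fin n}
    (hpq : ∀ v, vdeg H v = 2 → v = p ∨ v = q) (hab : (chordGraph H).Adj a b)
    (hlt : RelPos n p a < RelPos n p b) :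
    0 < RelPos n p a ∧ RelPos n p a < RelPos n p q ∧ RelPos n p q < RelPos n p b := by
  obtain ⟨w, haw, hwb, hw⟩ := hH.exists_vdeg_eq_two_between hab hlt
  obtain ⟨z, hbz, hza, hz⟩ := hH.exists_vdeg_eq_two_between (p := b) hab.symm
    (by rw [relPos_self]; exact relPos_pos_of_ne hab.ne')
  have hz_outside : RelPos n p b < RelPos n p z ∨ RelPos n p z < RelPos n p a :=
    (cyclicBtw_iff_of_gt hlt z).1 ⟨by rw [relPos_self] at hbz; omega, hza⟩
  have hp := relPos_self p
  rcases hpq w hw with rfl | rfl <;> rcases hpq z hz with rfl | rfl <;> omega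

end IsCycleWithChords

/-! ### Outerpaths on two tracks -/

/-- A planar layout of `G` on two parallel tracks: `rank` orders the vertices along the track
`side`, edges inside a track join consecutive vertices, and edges between the tracks do not
cross. -/
structure IsTrackLayout {V : Type} (G : SimpleGraph V) (side : V → Bool) (rank : V → ℕ) :
    Prop where
  eq_of_rank_eq : ∀ {a b}, side a = side b → rank a = rank b → a = b
  not_between : ∀ {a b w}, G.Adj a b → side a = side b → side w = side a →
    rank a < rank w → ¬rank w < rank b
  rank_le : ∀ {a b a' b'}, G.Adj a b → G.Adj a' b' → side a = true → side b = false →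
    side a' = true → side b' = false → rank a < rank a' → rank b ≤ rank b'

theorem IsTrackLayout.comap {V W : Type} {G : SimpleGraph V} {side : V → Bool} {rank : V → ℕ}
    (hG : IsTrackLayout G side rank) {G' : SimpleGraph W} {f : W → V} (hf : Function.Injective f)
    (hG' : ∀ a b, G'.Adj a b → G.Adj (f a) (f b)) :
    IsTrackLayout G' (side ∘ f) (rank ∘ f) where
  eq_of_rank_eq hs hr := hf (hG.eq_of_rank_eq hs hr)
  not_between hab := hG.not_between (hG' _ _ hab)
  rank_le hab hab' := hG.rank_le (hG' _ _ hab) (hG' _ _ hab')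

namespace IsCycleWithChords

variable {n : ℕ} {H : SimpleGraph (Fin n)} {p q : Fin n}

theorem relPos_succ_of_same_arc (hH : IsCycleWithChords H)
    (hpq : ∀ v, vdeg H v = 2 → v = p ∨ v = q) (hq : RelPos n p q + 2 ≤ n) {a b : Fin n}
    (hab : H.Adj a b) (harc : RelPos n p a ≤ RelPos n p q ↔ RelPos n p b ≤ RelPos n p q) :
    RelPos n p b = RelPos n p a + 1 ∨ RelPos n p a = RelPos n p b + 1 := by
  by_cases hcyc : CycAdj n a b
  · have := (cycAdj_iff p a b).1 hcyc
    omega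
  · have hchord : (chordGraph H).Adj a b := ⟨hab, hcyc⟩
    rcases Nat.lt_or_gt_of_ne ((relPos_injective p).ne hab.ne) with h | h
    · have := hH.chord_separates hpq hchord h
      omega
    · have := hH.chord_separates hpq hchord.symm h
      omega

theorem relPos_le_of_cross_arcs (hH : IsCycleWithChords H) {a b a' b' : Fin n}
    (hab : H.Adj a b) (hab' : H.Adj a' b')
    (ha' : RelPos n p a' ≤ RelPos n p q) (hb : RelPos n p q < RelPos n p b)
    (hb' : RelPos n p q < RelPos n p b')
    (hlt : RelPos n p a < RelPos n p a') : RelPos n p b' ≤ RelPos n p b := by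
  have hbn' := relPos_lt p b'
  by_cases hcyc : CycAdj n a b
  · have := (cycAdj_iff p a b).1 hcyc
    omega
  by_cases hcyc' : CycAdj n a' b'
  · have := (cycAdj_iff p a' b').1 hcyc'
    omega
  exact (hH.chord_nested ⟨hab, hcyc⟩ ⟨hab', hcyc'⟩ hlt (by omega)).2

/-- The two arcs between `p` and `q` are the two tracks. -/
theorem isTrackLayout (hH : IsCycleWithChords H) (hpq : ∀ v, vdeg H v = 2 → v = p ∨ v = q)
    (hq : RelPos n p q + 2 ≤ n) :
    IsTrackLayout H (fun x => decide (RelPos n p x ≤ RelPos n p q))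
      (fun x => if RelPos n p x ≤ RelPos n p q then RelPos n p x else n - RelPos n p x) where
  eq_of_rank_eq {a b} hs hr := by
    have ha := relPos_lt p a
    have hb := relPos_lt p b
    rw [decide_eq_decide] at hs
    apply relPos_injective p
    split_ifs at hr <;> omega
  not_between {a b w} hab hs hs' := by
    rw [decide_eq_decide] at hs hs'
    have := hH.relPos_succ_of_same_arc hpq hq hab hs
    split_ifs <;> omega
  rank_le {a b a' b'} hab hab' ha hb ha' hb' hlt := by
    simp only [decide_eq_true_eq, decide_eq_false_iff_not, not_le] at ha hb ha' hb'
    simp only [ha, ha', hb.not_ge, hb'.not_ge, if_true, if_false] at hlt ⊢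
    have := hH.relPos_le_of_cross_arcs hab hab' ha' hb hb' hlt
    omega

theorem exists_isTrackLayout (hH : IsCycleWithChords H) (hn : 3 ≤ n) (hne : p ≠ q)
    (hpq : ∀ v, vdeg H v = 2 → v = p ∨ v = q) :
    ∃ (side : Fin n → Bool) (rank : Fin n → ℕ),
      Function.Surjective side ∧ IsTrackLayout H side rank := by
  wlog hq : RelPos n p q + 2 ≤ n generalizing p q
  · refine this hne.symm (fun v hv => (hpq v hv).symm) ?_
    have := relPos_add_relPos_swap hne
    have := relPos_lt p q
    omega
  refine ⟨_, _, fun c => ?_, hH.isTrackLayout hpq hq⟩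
  cases c
  · obtain ⟨y, hy⟩ := exists_relPos_eq p (show n - 1 < n by omega)
    exact ⟨y, decide_eq_false (by omega)⟩
  · exact ⟨q, decide_eq_true le_rfl⟩

end IsCycleWithChords

theorem IsOuterpath.exists_isTrackLayout {V : Type} {n : ℕ} {Z : SimpleGraph V}
    (hZ : IsOuterpath n Z) (hn : 3 ≤ n) :
    ∃ (side : V → Bool) (rank : V → ℕ), Function.Surjective side ∧ IsTrackLayout Z side rank := by
  obtain ⟨f, H, hH, hZH⟩ := hZ
  obtain ⟨p, q, hne, hdeg⟩ := Set.ncard_eq_two.1 hH.2.2.2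
  obtain ⟨side, rank, hside, hlayout⟩ := hH.isCycleWithChords.exists_isTrackLayout hn hne
    fun v hv => hdeg.subset hv
  exact ⟨side ∘ f.symm, rank ∘ f.symm, hside.comp f.symm.surjective,
    hlayout.comap f.symm.injective fun a b hab => hZH _ _ (by simpa using hab)⟩

/-! ### Strip orders -/

/-- `s` is the latest vertex of its side that precedes `t`. -/
def IsLatestBefore {V : Type} [LinearOrder V] (side : V → Bool) (s t : V) : Prop :=
  s < t ∧ ∀ w, s < w → w < t → side w ≠ side s

theorem IsLatestBefore.le_of_lt {V : Type} [LinearOrder V] {side : V → Bool} {s t w : V}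
    (h : IsLatestBefore side s t) (hs : side w = side s) (hw : s < w) : t ≤ w :=
  not_lt.1 fun hwt => h.2 w hw hwt hs

theorem IsLatestBefore.eq_of_side_eq {V : Type} [LinearOrder V] {side : V → Bool} {s s' t : V}
    (h : IsLatestBefore side s t) (h' : IsLatestBefore side s' t) (hs : side s = side s') :
    s = s' :=
  le_antisymm (not_lt.1 fun hlt => (h'.le_of_lt hs hlt).not_gt h.1)
    (not_lt.1 fun hlt => (h.le_of_lt hs.symm hlt).not_gt h'.1)

/-- The vertex order sweeps the strip between the two sides: every edge leads back from its later
endpoint to the latest preceding vertex of one of the sides. -/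
def IsStripOrder {V : Type} [LinearOrder V] (G : SimpleGraph V) (side : V → Bool) : Prop :=
  ∀ a b, G.Adj a b → a < b → IsLatestBefore side a b

section StripKey

variable {V : Type} [Fintype V] (G : SimpleGraph V) (side : V → Bool) (rank : V → ℕ)

open Classical in
/-- A strict upper bound for the ranks on the track `false` of all neighbors of vertices of the
track `true` that precede `x`. -/
noncomputable def reach (x : V) : ℕ :=
  Finset.univ.sup fun y =>
    if side y = false ∧ ∃ x', side x' = true ∧ rank x' < rank x ∧ G.Adj x' y
    then rank y + 1 else 0

/-- The sweep position of a vertex: a vertex of the track `true` comes immediately after the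
neighbors of its predecessors on that track. -/
noncomputable def stripKey (x : V) : ℕ ×ₗ ℕ :=
  toLex (if side x then (reach G side rank x, rank x + 1) else (rank x + 1, 0))

variable {G side rank}

theorem lt_reach_iff {x : V} {m : ℕ} :
    m < reach G side rank x ↔ ∃ y x', side y = false ∧ side x' = true ∧ rank x' < rank x ∧
      G.Adj x' y ∧ m ≤ rank y := by
  simp only [reach, Finset.lt_sup_iff, Finset.mem_univ, true_and]
  constructor
  · rintro ⟨y, hy⟩
    split_ifs at hy with h
    · obtain ⟨hy', x', hx', hlt, hadj⟩ := h
      exact ⟨y, x', hy', hx', hlt, hadj, by omega⟩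
    · omega
  · rintro ⟨y, x', hy', hx', hlt, hadj, hm⟩
    exact ⟨y, by rw [if_pos ⟨hy', x', hx', hlt, hadj⟩]; omega⟩

theorem reach_mono {x y : V} (h : rank x ≤ rank y) :
    reach G side rank x ≤ reach G side rank y := by
  refine le_of_forall_lt fun m hm => ?_
  obtain ⟨z, x', hz, hx', hlt, hadj, hmz⟩ := lt_reach_iff.1 hm
  exact lt_reach_iff.2 ⟨z, x', hz, hx', hlt.trans_le h, hadj, hmz⟩

theorem stripKey_lt_of_same_side {x y : V} (hs : side x = side y) (h : rank x < rank y) :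
    stripKey G side rank x < stripKey G side rank y := by
  rw [stripKey, stripKey, Prod.Lex.toLex_lt_toLex]
  cases hx : side x
  · simp [← hs, hx, h]
  · simpa [← hs, hx, h] using (reach_mono h.le).lt_or_eq

theorem stripKey_lt_iff_of_same_side {x y : V} (hs : side x = side y) :
    stripKey G side rank x < stripKey G side rank y ↔ rank x < rank y := by
  refine ⟨fun h => ?_, stripKey_lt_of_same_side hs⟩
  by_contra hle
  rcases (not_lt.1 hle).lt_or_eq with hlt | heq
  · exact lt_asymm h (stripKey_lt_of_same_side hs.symm hlt)
  · have hreach : reach G side rank x = reach G side rank y :=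
      le_antisymm (reach_mono heq.ge) (reach_mono heq.le)
    exact h.ne (by simp only [stripKey, hs, heq, hreach])

theorem stripKey_lt_iff_lt_reach {x y : V} (hx : side x = true) (hy : side y = false) :
    stripKey G side rank y < stripKey G side rank x ↔ rank y < reach G side rank x := by
  simp only [stripKey, hx, hy, Prod.Lex.toLex_lt_toLex, if_true, Bool.false_eq_true, if_false]
  omega

theorem IsTrackLayout.stripKey_injective (hG : IsTrackLayout G side rank) :
    Function.Injective (stripKey G side rank) := by
  intro x y h
  have hside : side x = side y := by
    have hsnd := congrArg (fun k => (ofLex k).2) h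
    cases hx : side x <;> cases hy : side y <;> simp [stripKey, hx, hy] at hsnd ⊢
  refine hG.eq_of_rank_eq hside (le_antisymm ?_ ?_)
  · exact not_lt.1 fun hlt => (stripKey_lt_of_same_side hside.symm hlt).ne' h
  · exact not_lt.1 fun hlt => (stripKey_lt_of_same_side hside hlt).ne h

theorem IsTrackLayout.side_ne_of_stripKey_between (hG : IsTrackLayout G side rank) {a b w : V}
    (hab : G.Adj a b) (haw : stripKey G side rank a < stripKey G side rank w)
    (hwb : stripKey G side rank w < stripKey G side rank b) : side w ≠ side a := by
  intro hw
  have hrank := (stripKey_lt_iff_of_same_side hw.symm).1 haw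
  by_cases hs : side a = side b
  · exact hG.not_between hab hs hw hrank ((stripKey_lt_iff_of_same_side (hw.trans hs)).1 hwb)
  cases ha : side a
  · have hb : side b = true := by simpa [ha] using hs
    obtain ⟨y, x', hy, hx', hlt, hadj, hwy⟩ :=
      lt_reach_iff.1 ((stripKey_lt_iff_lt_reach hb (hw.trans ha)).1 hwb)
    have := hG.rank_le hadj hab.symm hx' hy hb ha hlt
    omega
  · have hb : side b = false := by simpa [ha] using hs
    exact lt_asymm hwb ((stripKey_lt_iff_lt_reach (hw.trans ha) hb).2
      (lt_reach_iff.2 ⟨b, a, hb, ha, hrank, hab, le_rfl⟩))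

end StripKey

theorem IsTrackLayout.exists_isStripOrder {V : Type} [Finite V] {G : SimpleGraph V}
    {side : V → Bool} {rank : V → ℕ} (hG : IsTrackLayout G side rank) :
    ∃ _ : LinearOrder V, IsStripOrder G side := by
  cases nonempty_fintype V
  exact ⟨LinearOrder.lift' (stripKey G side rank) hG.stripKey_injective,
    fun _ _ hab hlt => ⟨hlt, fun _ => hG.side_ne_of_stripKey_between hab⟩⟩

/-! ### Segments and polylines -/

namespace Polyline

theorem mem_curve_iff {P : Polyline} {z : ℝ × ℝ} :
    z ∈ P.curve ↔ ∃ m ∈ P.segs, z ∈ segment ℝ m.1 m.2 := by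
  simp only [curve, segs, Set.mem_iUnion, Set.mem_ofPred_eq]
  exact ⟨fun ⟨i, hi⟩ => ⟨_, ⟨i, rfl⟩, hi⟩, by rintro ⟨_, ⟨i, rfl⟩, hi⟩; exact ⟨i, hi⟩⟩

variable {p q r s : ℝ × ℝ} {m : (ℝ × ℝ) × (ℝ × ℝ)}

theorem mem_segs_one : m ∈ (⟨1, ![p, q]⟩ : Polyline).segs ↔ m = (p, q) := by
  simp [segs]

theorem mem_segs_two : m ∈ (⟨2, ![p, q, r]⟩ : Polyline).segs ↔ m = (p, q) ∨ m = (q, r) := by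
  simp [segs, Fin.exists_fin_succ]

theorem mem_segs_three :
    m ∈ (⟨3, ![p, q, r, s]⟩ : Polyline).segs ↔ m = (p, q) ∨ m = (q, r) ∨ m = (r, s) := by
  simp [segs, Fin.exists_fin_succ]

end Polyline

/-- The first (`c = true`) or second (`c = false`) coordinate, so that statements symmetric in
the two axes can be made once. -/
def coord (c : Bool) (p : ℝ × ℝ) : ℝ := if c then p.1 else p.2

/-- The grid point whose coordinate `c` is `a` and whose other coordinate is `b`. -/
def gridPt (c : Bool) (a b : ℤ) : ℝ × ℝ := if c then (a, b) else (b, a)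

@[simp]
theorem coord_gridPt (c : Bool) (a b : ℤ) : coord c (gridPt c a b) = a := by
  cases c <;> rfl

@[simp]
theorem coord_not_gridPt (c : Bool) (a b : ℤ) : coord (!c) (gridPt c a b) = b := by
  cases c <;> rfl

theorem gridPt_not (c : Bool) (a b : ℤ) : gridPt (!c) a b = gridPt c b a := by
  cases c <;> rfl

theorem ext_coord (c : Bool) {p q : ℝ × ℝ} (h : coord c p = coord c q)
    (h' : coord (!c) p = coord (!c) q) : p = q := by
  cases c
  · exact Prod.ext h' h
  · exact Prod.ext h h'

theorem onGridPt_gridPt (c : Bool) {a b N : ℤ} (ha : 1 ≤ a) (ha' : a ≤ N) (hb : 1 ≤ b)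
    (hb' : b ≤ N) : OnGridPt N N (gridPt c a b) := by
  cases c
  · exact ⟨b, a, rfl, hb, hb', ha, ha'⟩
  · exact ⟨a, b, rfl, ha, ha', hb, hb'⟩

theorem exists_coord_eq_of_mem_segment {p q z : ℝ × ℝ} (hz : z ∈ segment ℝ p q) :
    ∃ θ ∈ Set.Icc (0 : ℝ) 1, ∀ c, coord c z = coord c p + θ * (coord c q - coord c p) := by
  rw [segment_eq_image'] at hz
  obtain ⟨θ, hθ, rfl⟩ := hz
  exact ⟨θ, hθ, fun c => by cases c <;> rfl⟩

theorem exists_coord_eq_of_mem_openSegment {p q z : ℝ × ℝ} (hz : z ∈ openSegment ℝ p q) :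
    ∃ θ ∈ Set.Ioo (0 : ℝ) 1, ∀ c, coord c z = coord c p + θ * (coord c q - coord c p) := by
  rw [openSegment_eq_image'] at hz
  obtain ⟨θ, hθ, rfl⟩ := hz
  exact ⟨θ, hθ, fun c => by cases c <;> rfl⟩

theorem coord_eq_of_mem_segment {p q z : ℝ × ℝ} {c : Bool} {x : ℝ} (hz : z ∈ segment ℝ p q)
    (hp : coord c p = x) (hq : coord c q = x) : coord c z = x := by
  obtain ⟨θ, -, h⟩ := exists_coord_eq_of_mem_segment hz
  rw [h, hp, hq, sub_self, mul_zero, add_zero]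

theorem coord_lt_of_mem_segment {p q z : ℝ × ℝ} {c : Bool} {x : ℝ} (hz : z ∈ segment ℝ p q)
    (hp : coord c p < x) (hq : coord c q < x) : coord c z < x := by
  obtain ⟨θ, ⟨h0, h1⟩, h⟩ := exists_coord_eq_of_mem_segment hz
  rw [h]
  rcases le_total (coord c p) (coord c q) with hpq | hpq <;> nlinarith

/-- The condition on segments of two edges from different graphs of a RacSim drawing. -/
def RacCompatible (m m' : (ℝ × ℝ) × (ℝ × ℝ)) : Prop :=
  (segment ℝ m.1 m.2 ∩ segment ℝ m'.1 m'.2).Subsingleton ∧ (SegCross m m' → SegPerp m m')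

namespace RacCompatible

variable {m m' : (ℝ × ℝ) × (ℝ × ℝ)} {c : Bool}

theorem of_coord_eq (h : coord (!c) m.1 = coord (!c) m.2) (h' : coord c m'.1 = coord c m'.2) :
    RacCompatible m m' := by
  constructor
  · rintro z ⟨hz, hz'⟩ w ⟨hw, hw'⟩
    apply ext_coord c
    · rw [coord_eq_of_mem_segment hz' h' rfl, coord_eq_of_mem_segment hw' h' rfl]
    · rw [coord_eq_of_mem_segment hz h rfl, coord_eq_of_mem_segment hw h rfl]
  · intro
    cases c <;> simp_all [coord, SegPerp]

theorem of_coord_lt {y : ℝ} (h₁ : coord c m.1 < y) (h₂ : coord c m.2 < y)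
    (h₁' : coord c m'.1 = y) (h₂' : coord c m'.2 = y) : RacCompatible m m' := by
  have hdisj (z : ℝ × ℝ) (hz : z ∈ segment ℝ m.1 m.2) (hz' : z ∈ segment ℝ m'.1 m'.2) : False :=
    (coord_lt_of_mem_segment hz h₁ h₂).ne (coord_eq_of_mem_segment hz' h₁' h₂')
  refine ⟨fun z hz => (hdisj z hz.1 hz.2).elim, ?_⟩
  rintro ⟨z, hz, hz'⟩
  exact (hdisj z (openSegment_subset_segment _ _ _ hz)
    (openSegment_subset_segment _ _ _ hz')).elim

/-- The first segment can meet the parallel grid line of the second only in one of its endpoints. -/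
theorem of_unit_step {k l d : ℤ} (h₁ : coord c m.1 = k) (h₂ : coord c m.2 = l)
    (hkl : l = k + 1 ∨ k = l + 1) (h₁' : coord c m'.1 = d) (h₂' : coord c m'.2 = d) :
    RacCompatible m m' := by
  have hne : (l : ℝ) - k ≠ 0 := sub_ne_zero.2 (by norm_cast; omega)
  constructor
  · rintro z ⟨hz, hz'⟩ w ⟨hw, hw'⟩
    obtain ⟨θ, -, hθ⟩ := exists_coord_eq_of_mem_segment hz
    obtain ⟨η, -, hη⟩ := exists_coord_eq_of_mem_segment hw
    have hz_level := coord_eq_of_mem_segment hz' h₁' h₂'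
    have hw_level := coord_eq_of_mem_segment hw' h₁' h₂'
    rw [hθ, h₁, h₂] at hz_level
    rw [hη, h₁, h₂] at hw_level
    obtain rfl : θ = η := mul_right_cancel₀ hne (by linarith)
    exact ext_coord c (by rw [hθ, hη]) (by rw [hθ, hη])
  · rintro ⟨z, hz, hz'⟩
    obtain ⟨θ, ⟨h0, h1⟩, hθ⟩ := exists_coord_eq_of_mem_openSegment hz
    have hz_level := coord_eq_of_mem_segment (openSegment_subset_segment _ _ _ hz') h₁' h₂'
    rw [hθ, h₁, h₂] at hz_level
    rcases hkl with rfl | rfl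
    · have hkd : k < d := by exact_mod_cast (by push_cast at hz_level; linarith : (k : ℝ) < d)
      have hdk : d < k + 1 := by
        exact_mod_cast (by push_cast at hz_level; linarith : (d : ℝ) < k + 1)
      omega
    · have hld : l < d := by exact_mod_cast (by push_cast at hz_level; linarith : (l : ℝ) < d)
      have hdl : d < l + 1 := by
        exact_mod_cast (by push_cast at hz_level; linarith : (d : ℝ) < l + 1)
      omega

end RacCompatible

namespace SimDrawing

variable {V : Type}

theorem PlanarEach.subsingleton_inter {m : ℕ} {G : Fin m → SimpleGraph V} {D : SimDrawing G}
    (hD : D.PlanarEach) {i : Fin m} {e e' : Sym2 V} (he : e ∈ (G i).edgeSet)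
    (he' : e' ∈ (G i).edgeSet) (hne : e ≠ e') :
    ((D.poly i e).curve ∩ (D.poly i e').curve).Subsingleton := by
  intro z hz w hw
  obtain ⟨v, hv, hv', rfl⟩ := hD i e he e' he' hne hz
  obtain ⟨u, hu, hu', rfl⟩ := hD i e he e' he' hne hw
  by_contra hvu
  have hvu' : v ≠ u := fun h => hvu (congrArg D.pos h)
  exact hne (((Sym2.mem_and_mem_iff hvu').1 ⟨hv, hu⟩).trans
    ((Sym2.mem_and_mem_iff hvu').1 ⟨hv', hu'⟩).symm)

theorem isRacSim_of_racCompatible {G₁ G₂ : SimpleGraph V} {D : SimDrawing ![G₁, G₂]}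
    (hD : D.PlanarEach)
    (hrac : ∀ e ∈ G₁.edgeSet, ∀ e' ∈ G₂.edgeSet, ∀ m ∈ (D.poly 0 e).segs,
      ∀ m' ∈ (D.poly 1 e').segs, RacCompatible m m') : D.IsRacSim := by
  refine ⟨hD, fun i e he j e' he' hne m hm m' hm' => ?_,
    fun i j hij e he e' he' m hm m' hm' => ?_⟩
  · by_cases hij : i = j
    · subst hij
      exact (hD.subsingleton_inter he he' (by simpa using hne)).anti
        (Set.inter_subset_inter (fun z hz => Polyline.mem_curve_iff.2 ⟨m, hm, hz⟩)
          fun z hz => Polyline.mem_curve_iff.2 ⟨m', hm', hz⟩)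
    · fin_cases i <;> fin_cases j
      · exact absurd rfl hij
      · exact (hrac e he e' he' m hm m' hm').1
      · rw [Set.inter_comm]
        exact (hrac e' he' e he m' hm' m hm).1
      · exact absurd rfl hij
  · fin_cases i <;> fin_cases j
    · exact absurd rfl hij
    · exact (hrac e he e' he' m hm m' hm').2
    · intro hcross
      have := (hrac e' he' e he m' hm' m hm).2 (by rwa [SegCross, Set.inter_comm])
      unfold SegPerp at this ⊢
      linarith
    · exact absurd rfl hij

end SimDrawing

/-! ### The drawing -/

/-- Coordinates for drawing an outerpath with strip order `<` on `V` together with a matching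
whose edges are the two-element fibers of `cls`, on a grid of side length `N`. The point of `v` has
`track (side v) v` as its coordinate in the direction of its side and `depth v` as its other
coordinate; `track (!side v) v` is where edges from the other side turn towards `v`. The two units
between different depths keep the bends of outerpath edges off the matching edges. -/
structure StripLayout {V : Type} [LinearOrder V] (side : V → Bool) (cls : V → ℕ) (N : ℤ) where
  track : Bool → V → ℤ
  depth : V → ℤ
  track_strictMono : ∀ c, StrictMono (track c)
  track_add_two_le : ∀ {r s t}, side s = side t → s < t → r < t →
    track (side t) r + 2 ≤ track (side t) t
  track_lt_depth : ∀ v w, track (!side v) w < depth v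
  depth_eq : ∀ {v w}, side v = side w → cls v = cls w → depth v = depth w
  depth_add_two_le : ∀ {v w}, side v = side w → cls v < cls w → depth v + 2 ≤ depth w
  one_le_track : ∀ c v, 1 ≤ track c v
  track_le : ∀ c v, track c v ≤ N
  depth_lt : ∀ v, depth v < N

namespace StripLayout

variable {V : Type} [LinearOrder V] {side : V → Bool} {cls : V → ℕ} {N : ℤ}
  (L : StripLayout side cls N)

/-- The point representing a vertex. -/
def pos (v : V) : ℝ × ℝ := gridPt (side v) (L.track (side v) v) (L.depth v)

/-- The drawing of the outerpath edge from `s` to a later vertex `t`: a step that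
changes the depth by one, outwards if `s` and `t` are on the same side and inwards otherwise, then a
segment at a right angle to the axis of `s`, then a segment ending in `t`. -/
def outerpathLine (s t : V) : Polyline :=
  if side t = side s then
    ⟨3, ![L.pos s, gridPt (side s) (L.track (side s) t - 1) (L.depth s + 1),
      gridPt (side s) (L.track (side s) t - 1) (L.depth t + 1), L.pos t]⟩
  else
    ⟨3, ![L.pos s, gridPt (side s) (L.track (side s) t) (L.depth s - 1),
      gridPt (side s) (L.track (side s) t) (L.track (!side s) t), L.pos t]⟩

/-- The drawing of the matching edge between `v` and `w`, axis-parallel at the depths of its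
endpoints. -/
def matchingLine (v w : V) : Polyline :=
  if side v = side w then ⟨1, ![L.pos v, L.pos w]⟩
  else ⟨2, ![L.pos v, gridPt (side v) (L.depth w) (L.depth v), L.pos w]⟩

@[simp]
theorem coord_side_pos (v : V) : coord (side v) (L.pos v) = L.track (side v) v :=
  coord_gridPt ..

@[simp]
theorem coord_not_side_pos (v : V) : coord (!side v) (L.pos v) = L.depth v :=
  coord_not_gridPt ..

theorem eq_pos {v : V} {z : ℝ × ℝ} (h : coord (side v) z = L.track (side v) v)
    (h' : coord (!side v) z = L.depth v) : z = L.pos v :=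
  ext_coord (side v) (by simpa using h) (by simpa using h')

theorem pos_injective : Function.Injective L.pos := by
  intro v w h
  by_cases hs : side v = side w
  · have := congrArg (coord (side v)) h
    rw [coord_side_pos, hs, coord_side_pos] at this
    exact (L.track_strictMono _).injective (by exact_mod_cast this)
  · have := congrArg (coord (side v)) h
    rw [coord_side_pos, Bool.eq_not_of_ne hs, coord_not_side_pos] at this
    exact absurd (by exact_mod_cast this) (L.track_lt_depth w v).ne

/-! ### Planarity of the outerpath -/

/-- The constraints on a point of the outerpath edge from `s` to `t` that lies on its first two
segments, or on its third segment if `s` and `t` are on the same side. The fields `steep` and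
`flat` order the edges leaving `s` by their slopes. -/
structure InColumn (s t : V) (z : ℝ × ℝ) : Prop where
  track_le : L.track (side s) s ≤ coord (side s) z
  le_track : coord (side s) z ≤ L.track (side s) t
  row_le : L.track (!side s) t ≤ coord (!side s) z
  eq_depth_start : coord (side s) z = L.track (side s) s → coord (!side s) z = L.depth s
  eq_depth_end : side t = side s → coord (side s) z = L.track (side s) t →
    coord (!side s) z = L.depth t
  row_lt : side t = side s → ∀ r, L.track (!side s) r < coord (!side s) z
  steep : side t ≠ side s → coord (side s) z - L.track (side s) s ≤
    (L.depth s - coord (!side s) z) * (L.track (side s) t - L.track (side s) s)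
  flat : ∀ r < t, coord (side s) z ≤ L.track (side s) r →
    (L.depth s - coord (!side s) z) * (L.track (side s) t - L.track (side s) s) ≤
      coord (side s) z - L.track (side s) s

/-- The constraints on a point of the third segment of the outerpath edge from `s` to `t` if these
vertices are on different sides. -/
structure InRow (s t : V) (z : ℝ × ℝ) : Prop where
  side_eq : side t = !side s
  eq_row : coord (!side s) z = L.track (!side s) t
  track_le : L.track (side s) t ≤ coord (side s) z

variable {L} {s t s' t' : V} {z : ℝ × ℝ}

theorem coord_eq_of_mem_outerpathLine_of_eq (hs : side t = side s)
    (hz : z ∈ (L.outerpathLine s t).curve) :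
    ∃ θ ∈ Set.Icc (0 : ℝ) 1,
      (coord (side s) z =
          L.track (side s) s + θ * (L.track (side s) t - 1 - L.track (side s) s) ∧
        coord (!side s) z = L.depth s + θ) ∨
      (coord (side s) z = L.track (side s) t - 1 ∧
        coord (!side s) z = L.depth s + 1 + θ * (L.depth t - L.depth s)) ∨
      (coord (side s) z = L.track (side s) t - 1 + θ ∧
        coord (!side s) z = L.depth t + 1 - θ) := by
  obtain ⟨m, hm, hz⟩ := Polyline.mem_curve_iff.1 hz
  obtain ⟨θ, hθ, hcoord⟩ := exists_coord_eq_of_mem_segment hz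
  have hx := hcoord (side s)
  have hy := hcoord (!side s)
  have hxt : coord (side s) (L.pos t) = L.track (side s) t := by rw [← hs, coord_side_pos]
  have hyt : coord (!side s) (L.pos t) = L.depth t := by rw [← hs, coord_not_side_pos]
  rw [outerpathLine, if_pos hs, Polyline.mem_segs_three] at hm
  refine ⟨θ, hθ, ?_⟩
  rcases hm with rfl | rfl | rfl <;>
    simp only [coord_side_pos, coord_not_side_pos, coord_gridPt, coord_not_gridPt, hxt, hyt]
      at hx hy <;>
    push_cast at hx hy
  · exact Or.inl ⟨hx, by linarith⟩
  · exact Or.inr (Or.inl ⟨by linarith, by linarith⟩)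
  · exact Or.inr (Or.inr ⟨by linarith, by linarith⟩)

theorem coord_eq_of_mem_outerpathLine_of_ne (hs : side t ≠ side s)
    (hz : z ∈ (L.outerpathLine s t).curve) :
    ∃ θ ∈ Set.Icc (0 : ℝ) 1,
      (coord (side s) z = L.track (side s) s + θ * (L.track (side s) t - L.track (side s) s) ∧
        coord (!side s) z = L.depth s - θ) ∨
      (coord (side s) z = L.track (side s) t ∧
        coord (!side s) z =
          L.depth s - 1 + θ * (L.track (!side s) t - (L.depth s - 1))) ∨
      (coord (side s) z =
          L.track (side s) t + θ * (L.depth t - L.track (side s) t) ∧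
        coord (!side s) z = L.track (!side s) t) := by
  obtain ⟨m, hm, hz⟩ := Polyline.mem_curve_iff.1 hz
  obtain ⟨θ, hθ, hcoord⟩ := exists_coord_eq_of_mem_segment hz
  have hx := hcoord (side s)
  have hy := hcoord (!side s)
  have hxt : coord (side s) (L.pos t) = L.depth t := by
    rw [Bool.eq_not_of_ne hs.symm, coord_not_side_pos]
  have hyt : coord (!side s) (L.pos t) = L.track (!side s) t := by
    rw [← Bool.eq_not_of_ne hs, coord_side_pos]
  rw [outerpathLine, if_neg hs, Polyline.mem_segs_three] at hm
  refine ⟨θ, hθ, ?_⟩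
  rcases hm with rfl | rfl | rfl <;>
    simp only [coord_side_pos, coord_not_side_pos, coord_gridPt, coord_not_gridPt, hxt, hyt]
      at hx hy <;>
    push_cast at hx hy
  · exact Or.inl ⟨hx, by linarith⟩
  · exact Or.inr (Or.inl ⟨by linarith, hy⟩)
  · exact Or.inr (Or.inr ⟨hx, by linarith⟩)

theorem inColumn_of_side_eq (hst : s < t) (hs : side t = side s)
    (hz : z ∈ (L.outerpathLine s t).curve) : L.InColumn s t z := by
  obtain ⟨θ, ⟨h0, h1⟩, hθ⟩ := coord_eq_of_mem_outerpathLine_of_eq hs hz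
  have hgap (r : V) (hr : r < t) : (L.track (side s) r + 2 : ℝ) ≤ L.track (side s) t := by
    have := L.track_add_two_le hs.symm hst hr
    rw [hs] at this
    exact_mod_cast this
  have hrow (r : V) : (L.track (!side s) r : ℝ) < coord (!side s) z := by
    have hrs : (L.track (!side s) r : ℝ) < L.depth s := by exact_mod_cast L.track_lt_depth s r
    have hrt : (L.track (!side s) r : ℝ) < L.depth t := by
      exact_mod_cast hs ▸ L.track_lt_depth t r
    rcases hθ with ⟨-, hy⟩ | ⟨-, hy⟩ | ⟨-, hy⟩
    · linarith
    · nlinarith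
    · linarith
  have hgap_s := hgap s hst
  refine ⟨?_, ?_, (hrow t).le, fun hx => ?_, fun _ hx => ?_, fun _ => hrow,
    fun h => absurd hs h, fun r hr hxr => ?_⟩
  · rcases hθ with ⟨hx, -⟩ | ⟨hx, -⟩ | ⟨hx, -⟩ <;> nlinarith
  · rcases hθ with ⟨hx, -⟩ | ⟨hx, -⟩ | ⟨hx, -⟩ <;> nlinarith
  · rcases hθ with ⟨hx', hy⟩ | ⟨hx', -⟩ | ⟨hx', -⟩ <;> nlinarith
  · rcases hθ with ⟨hx', -⟩ | ⟨hx', -⟩ | ⟨hx', hy⟩ <;> nlinarith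
  · have hgap_r := hgap r hr
    rcases hθ with ⟨hx, hy⟩ | ⟨hx, -⟩ | ⟨hx, -⟩ <;> nlinarith

theorem inColumn_or_inRow_of_side_ne (hst : s < t) (hs : side t ≠ side s)
    (hz : z ∈ (L.outerpathLine s t).curve) : L.InColumn s t z ∨ L.InRow s t z := by
  obtain ⟨θ, ⟨h0, h1⟩, hθ⟩ := coord_eq_of_mem_outerpathLine_of_ne hs hz
  have hlt (r : V) (hr : r < t) : (L.track (side s) r : ℝ) < L.track (side s) t := by
    exact_mod_cast L.track_strictMono (side s) hr
  have hlt_s := hlt s hst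
  have hrow : (L.track (!side s) t : ℝ) + 1 ≤ L.depth s := by
    exact_mod_cast L.track_lt_depth s t
  have hcol : (L.track (side s) t : ℝ) < L.depth t := by
    have := L.track_lt_depth t t
    rw [← Bool.eq_not_of_ne hs.symm] at this
    exact_mod_cast this
  rcases hθ with ⟨hx, hy⟩ | ⟨hx, hy⟩ | ⟨hx, hy⟩
  · refine Or.inl ⟨by nlinarith, by nlinarith, by linarith, fun h => by nlinarith,
      fun h => absurd h hs, fun h => absurd h hs, fun _ => ?_, fun _ _ _ => ?_⟩
    · rw [hx, hy]; linarith
    · rw [hx, hy]; linarith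
  · have hy_le : coord (!side s) z ≤ L.depth s - 1 := by nlinarith
    refine Or.inl ⟨by linarith, hx.le, by nlinarith, fun h => by linarith,
      fun h => absurd h hs, fun h => absurd h hs, fun _ => by nlinarith, fun r hr hxr => ?_⟩
    linarith [hlt r hr]
  · exact Or.inr ⟨Bool.eq_not_of_ne hs, hy, by nlinarith⟩

theorem inColumn_or_inRow (hst : s < t) (hz : z ∈ (L.outerpathLine s t).curve) :
    L.InColumn s t z ∨ L.InRow s t z := by
  by_cases hs : side t = side s
  · exact Or.inl (inColumn_of_side_eq hst hs hz)
  · exact inColumn_or_inRow_of_side_ne hst hs hz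

theorem le_of_track_le {c : Bool} {v w : V} {x : ℝ} (h : L.track c v ≤ x)
    (h' : x ≤ L.track c w) : v ≤ w :=
  (L.track_strictMono c).le_iff_le.1 (by exact_mod_cast h.trans h')

theorem InColumn.eq_pos_of_lt (h : L.InColumn s t z) (h' : L.InColumn s t' z) (hst : s < t)
    (hst' : IsLatestBefore side s t') (htt' : t < t') : z = L.pos s := by
  have hs : side t ≠ side s := hst'.2 t hst htt'
  have hsteep := h.steep hs
  have hflat := h'.flat t htt' h.le_track
  have htt'_track : (L.track (side s) t : ℝ) < L.track (side s) t' := by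
    exact_mod_cast L.track_strictMono (side s) htt'
  have hst_track : (L.track (side s) s : ℝ) < L.track (side s) t := by
    exact_mod_cast L.track_strictMono (side s) hst
  have hdepth : (L.depth s : ℝ) - coord (!side s) z ≤ 0 := by nlinarith
  have hx : coord (side s) z = L.track (side s) s := le_antisymm (by nlinarith [hdepth]) h.track_le
  exact L.eq_pos hx (h.eq_depth_start hx)

theorem InColumn.eq_pos_of_le (h : L.InColumn s t z) (h' : L.InColumn s' t' z)
    (hs : side s = side s') (hts' : t ≤ s') : t = s' ∧ z = L.pos s' := by
  have hle : coord (side s') z ≤ L.track (side s') t := hs ▸ h.le_track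
  obtain rfl : t = s' := le_antisymm hts' (le_of_track_le h'.track_le hle)
  have hx := le_antisymm hle h'.track_le
  exact ⟨rfl, L.eq_pos hx (h'.eq_depth_start hx)⟩

theorem exists_eq_pos_of_inColumn_of_inColumn (hst : IsLatestBefore side s t)
    (hst' : IsLatestBefore side s' t') (hne : s(s, t) ≠ s(s', t')) (hs : side s = side s')
    (h : L.InColumn s t z) (h' : L.InColumn s' t' z) :
    ∃ v, v ∈ s(s, t) ∧ v ∈ s(s', t') ∧ z = L.pos v := by
  rcases lt_trichotomy s s' with hlt | rfl | hlt
  · obtain ⟨rfl, hz⟩ := h.eq_pos_of_le h' hs (hst.le_of_lt hs.symm hlt)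
    exact ⟨t, by simp, by simp, hz⟩
  · have htt' : t ≠ t' := by rintro rfl; exact hne rfl
    refine ⟨s, by simp, by simp, ?_⟩
    rcases htt'.lt_or_gt with hlt | hlt
    · exact h.eq_pos_of_lt h' hst.1 hst' hlt
    · exact h'.eq_pos_of_lt h hst'.1 hst hlt
  · obtain ⟨rfl, hz⟩ := h'.eq_pos_of_le h hs.symm (hst'.le_of_lt hs hlt)
    exact ⟨t', by simp, by simp, hz⟩

theorem InColumn.not_inRow_of_side_eq (hst : IsLatestBefore side s t)
    (hst' : IsLatestBefore side s' t') (hne : s(s, t) ≠ s(s', t')) (hs : side s = side s')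
    (h : L.InColumn s t z) : ¬L.InRow s' t' z := by
  intro h'
  obtain rfl : t = t' := le_antisymm (le_of_track_le (hs ▸ h.row_le) h'.eq_row.le)
    (le_of_track_le h'.track_le (hs ▸ h.le_track))
  exact hne (by rw [hst.eq_of_side_eq hst' hs])

theorem InRow.not_inRow_of_side_eq (hst : IsLatestBefore side s t)
    (hst' : IsLatestBefore side s' t') (hne : s(s, t) ≠ s(s', t')) (hs : side s = side s')
    (h : L.InRow s t z) : ¬L.InRow s' t' z := by
  intro h'
  have hrow : (L.track (!side s') t : ℝ) = L.track (!side s') t' :=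
    (hs ▸ h.eq_row).symm.trans h'.eq_row
  obtain rfl : t = t' := (L.track_strictMono _).injective (by exact_mod_cast hrow)
  exact hne (by rw [hst.eq_of_side_eq hst' hs])

theorem InColumn.not_inColumn_of_side_eq_not (hs : side s' = !side s) (h : L.InColumn s t z) :
    ¬L.InColumn s' t' z := by
  intro h'
  have hle' := h'.le_track
  have hrow_le' := h'.row_le
  have hrow' := h'.row_lt
  simp only [hs, Bool.not_not] at hle' hrow_le' hrow'
  obtain rfl : t = t' := le_antisymm (le_of_track_le h.row_le hle')
    (le_of_track_le hrow_le' h.le_track)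
  rcases Bool.eq_or_eq_not (side t) (side s) with ht | ht
  · exact (h.row_lt ht t).not_ge hle'
  · exact (hrow' ht t).not_ge h.le_track

theorem InRow.exists_eq_pos_of_inColumn (hst' : IsLatestBefore side s' t')
    (hs : side s' = !side s) (h : L.InRow s t z) (h' : L.InColumn s' t' z) :
    ∃ v, v ∈ s(s, t) ∧ v ∈ s(s', t') ∧ z = L.pos v := by
  have hts' : side t = side s' := h.side_eq.trans hs.symm
  have hx : coord (side s') z = L.track (side s') t := hs ▸ h.eq_row
  have hs't : s' ≤ t := le_of_track_le h'.track_le hx.le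
  have htt' : t ≤ t' := le_of_track_le hx.ge h'.le_track
  refine ⟨t, by simp, ?_⟩
  rcases hs't.eq_or_lt with rfl | hlt
  · exact ⟨by simp, L.eq_pos hx (h'.eq_depth_start hx)⟩
  · obtain rfl : t = t' := le_antisymm htt' (hst'.le_of_lt hts' hlt)
    refine ⟨by simp, L.eq_pos (hts' ▸ hx) ?_⟩
    rw [hts']
    exact h'.eq_depth_end hts' hx

theorem InRow.not_inRow_of_side_eq_not (hs : side s' = !side s) (h : L.InRow s t z) :
    ¬L.InRow s' t' z := by
  intro h'
  have heq' := h'.eq_row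
  have hle' := h'.track_le
  have hside' := h'.side_eq
  simp only [hs, Bool.not_not] at heq' hle' hside'
  obtain rfl : t = t' := le_antisymm (le_of_track_le h.track_le heq'.le)
    (le_of_track_le hle' h.eq_row.le)
  simpa [hside'] using h.side_eq

theorem exists_eq_pos_of_mem_outerpathLine (hst : IsLatestBefore side s t)
    (hst' : IsLatestBefore side s' t') (hne : s(s, t) ≠ s(s', t'))
    (hz : z ∈ (L.outerpathLine s t).curve) (hz' : z ∈ (L.outerpathLine s' t').curve) :
    ∃ v, v ∈ s(s, t) ∧ v ∈ s(s', t') ∧ z = L.pos v := by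
  rcases Bool.eq_or_eq_not (side s') (side s) with hs | hs <;>
    rcases inColumn_or_inRow hst.1 hz with h | h <;>
    rcases inColumn_or_inRow hst'.1 hz' with h' | h'
  · exact exists_eq_pos_of_inColumn_of_inColumn hst hst' hne hs.symm h h'
  · exact absurd h' (h.not_inRow_of_side_eq hst hst' hne hs.symm)
  · exact absurd h (h'.not_inRow_of_side_eq hst' hst hne.symm hs)
  · exact absurd h' (h.not_inRow_of_side_eq hst hst' hne hs.symm)
  · exact absurd h' (h.not_inColumn_of_side_eq_not hs)
  · obtain ⟨v, hv', hv, hz⟩ := h'.exists_eq_pos_of_inColumn hst (by simp [hs]) h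
    exact ⟨v, hv, hv', hz⟩
  · exact h.exists_eq_pos_of_inColumn hst' hs h'
  · exact absurd h' (h.not_inRow_of_side_eq_not hs)

/-! ### The matching -/

theorem exists_depth_of_mem_matchingLine_segs {v w : V} (hvw : cls v = cls w)
    {m : (ℝ × ℝ) × (ℝ × ℝ)} (hm : m ∈ (L.matchingLine v w).segs) :
    ∃ a, cls a = cls v ∧ coord (!side a) m.1 = L.depth a ∧ coord (!side a) m.2 = L.depth a ∧
      ∀ x, side x ≠ side a → cls a < cls x →
        coord (side a) m.1 < L.depth x ∧ coord (side a) m.2 < L.depth x := by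
  have htrack (u x : V) (hx : side x ≠ side u) : (L.track (side u) u : ℝ) < L.depth x := by
    rw [Bool.eq_not_of_ne hx.symm]
    exact_mod_cast L.track_lt_depth x u
  have hdepth (u x : V) (hx : side u = side x) (hux : cls u < cls x) :
      (L.depth u : ℝ) < L.depth x := by
    have := L.depth_add_two_le hx hux
    exact_mod_cast (by omega : L.depth u < L.depth x)
  unfold matchingLine at hm
  split_ifs at hm with hs
  · obtain rfl := Polyline.mem_segs_one.1 hm
    refine ⟨v, rfl, by simp, ?_, fun x hx _ => ⟨?_, ?_⟩⟩
    · rw [hs, coord_not_side_pos, L.depth_eq hs hvw]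
    · simpa using htrack v x hx
    · simpa [hs] using htrack w x (hs ▸ hx)
  · have hw : side w = !side v := Bool.eq_not_of_ne (Ne.symm hs)
    have hcorner : gridPt (side v) (L.depth w) (L.depth v) =
        gridPt (side w) (L.depth v) (L.depth w) := by rw [hw, gridPt_not]
    rcases Polyline.mem_segs_two.1 hm with rfl | rfl
    · refine ⟨v, rfl, by simp, by simp, fun x hx hlt => ⟨by simpa using htrack v x hx, ?_⟩⟩
      simpa using hdepth w x (hw.trans (Bool.eq_not_of_ne hx).symm) (hvw ▸ hlt)
    · refine ⟨w, hvw.symm, by simp [hcorner], by simp, fun x hx hlt => ⟨?_, ?_⟩⟩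
      · simpa [hcorner] using hdepth v x (by rw [Bool.eq_not_of_ne hx, hw, Bool.not_not])
          (hvw ▸ hlt)
      · simpa using htrack w x hx

theorem disjoint_matchingLine_curve {v w v' w' : V} (hvw : cls v = cls w) (hvw' : cls v' = cls w')
    (hne : cls v ≠ cls v') :
    Disjoint (L.matchingLine v w).curve (L.matchingLine v' w').curve := by
  wlog hlt : cls v < cls v' generalizing v w v' w'
  · exact (this hvw' hvw hne.symm (hne.symm.lt_of_le (not_lt.1 hlt))).symm
  rw [Set.disjoint_left]
  intro z hz hz'
  obtain ⟨m, hm, hz⟩ := Polyline.mem_curve_iff.1 hz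
  obtain ⟨m', hm', hz'⟩ := Polyline.mem_curve_iff.1 hz'
  obtain ⟨a, ha, h₁, h₂, hbelow⟩ := exists_depth_of_mem_matchingLine_segs hvw hm
  obtain ⟨a', ha', h₁', h₂', -⟩ := exists_depth_of_mem_matchingLine_segs hvw' hm'
  have hcls : cls a < cls a' := by rwa [ha, ha']
  have hlevel := coord_eq_of_mem_segment hz h₁ h₂
  have hlevel' := coord_eq_of_mem_segment hz' h₁' h₂'
  rcases Bool.eq_or_eq_not (side a') (side a) with hs | hs
  · have := L.depth_add_two_le hs.symm hcls
    rw [hs, hlevel] at hlevel'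
    have : L.depth a = L.depth a' := by exact_mod_cast hlevel'
    omega
  · rw [hs, Bool.not_not] at hlevel'
    obtain ⟨hb₁, hb₂⟩ := hbelow a' (by simp [hs]) hcls
    exact (coord_lt_of_mem_segment hz hb₁ hb₂).ne hlevel'

end StripLayout

/-! ### The simultaneous drawing -/

theorem IsMatchingGraph.eq_of_adj {V : Type} [Finite V] {M : SimpleGraph V}
    (hM : IsMatchingGraph M) {a b c : V} (hab : M.Adj a b) (hac : M.Adj a c) : b = c :=
  (Set.ncard_le_one_iff).1 (hM a) hab hac

/-- `cls` numbers the components of the matching `M`. -/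
def IsMatchingClass {V : Type} (M : SimpleGraph V) (cls : V → ℕ) : Prop :=
  ∀ a b, cls a = cls b ↔ a = b ∨ M.Adj a b

theorem IsMatchingGraph.exists_isMatchingClass {V : Type} [Finite V] {M : SimpleGraph V}
    (hM : IsMatchingGraph M) : ∃ cls, IsMatchingClass M cls := by
  let r : Setoid V :=
    { r := fun a b => a = b ∨ M.Adj a b
      iseqv := by
        refine ⟨fun a => Or.inl rfl, fun h => h.imp Eq.symm fun h => h.symm, ?_⟩
        rintro a b c (rfl | hab) (rfl | hbc)
        · exact Or.inl rfl
        · exact Or.inr hbc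
        · exact Or.inr hab
        · exact Or.inl (hM.eq_of_adj hab.symm hbc) }
  obtain ⟨number⟩ := nonempty_embedding_nat (Quotient r)
  exact ⟨fun a => number (Quotient.mk r a), fun a b => number.injective.eq_iff.trans Quotient.eq⟩

theorem IsMatchingClass.edge_eq {V : Type} [Finite V] {M : SimpleGraph V} {cls : V → ℕ}
    (hcls : IsMatchingClass M cls) (hM : IsMatchingGraph M) {a b a' b' : V} (hab : M.Adj a b)
    (hab' : M.Adj a' b') (h : cls a = cls a') : s(a, b) = s(a', b') := by
  rcases (hcls a a').1 h with rfl | haa'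
  · rw [hM.eq_of_adj hab hab']
  · rw [hM.eq_of_adj hab haa', hM.eq_of_adj hab' haa'.symm, Sym2.eq_swap]

theorem mk_inf_sup {V : Type} [LinearOrder V] (e : Sym2 V) : s(e.inf, e.sup) = e := by
  rw [← Sym2.inf_eq_inf_and_sup_eq_sup]
  simp [e.inf_le_sup]

theorem adj_inf_sup {V : Type} [LinearOrder V] {G : SimpleGraph V} {e : Sym2 V}
    (he : e ∈ G.edgeSet) : G.Adj e.inf e.sup := by
  rwa [← SimpleGraph.mem_edgeSet, mk_inf_sup]

theorem inf_lt_sup_of_mem_edgeSet {V : Type} [LinearOrder V] {G : SimpleGraph V} {e : Sym2 V}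
    (he : e ∈ G.edgeSet) : e.inf < e.sup :=
  e.inf_le_sup.lt_of_ne (adj_inf_sup he).ne

namespace StripLayout

variable {V : Type} [LinearOrder V] {side : V → Bool} {cls : V → ℕ} {N : ℤ}
  {L : StripLayout side cls N}

theorem racCompatible_outerpathLine_of_side_eq {s t a : V} (hs : side a = side s)
    {m m' : (ℝ × ℝ) × (ℝ × ℝ)} (hm : m ∈ (L.outerpathLine s t).segs)
    (h₁' : coord (!side s) m'.1 = L.depth a) (h₂' : coord (!side s) m'.2 = L.depth a) :
    RacCompatible m m' := by
  unfold outerpathLine at hm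
  split_ifs at hm with ht <;> rcases Polyline.mem_segs_three.1 hm with rfl | rfl | rfl
  · exact .of_unit_step (k := L.depth s) (l := L.depth s + 1) (by simp) (by simp) (Or.inl rfl)
      h₁' h₂'
  · exact .of_coord_eq (by simp) (h₁'.trans h₂'.symm)
  · exact .of_unit_step (k := L.depth t + 1) (l := L.depth t) (by simp) (by simp [← ht])
      (Or.inr rfl) h₁' h₂'
  · exact .of_unit_step (k := L.depth s) (l := L.depth s - 1) (by simp) (by simp)
      (Or.inr (by ring)) h₁' h₂'
  · exact .of_coord_eq (by simp) (h₁'.trans h₂'.symm)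
  · have hlt : (L.track (!side s) t : ℝ) < L.depth a := by
      exact_mod_cast hs ▸ L.track_lt_depth a t
    refine .of_coord_lt (by simpa using hlt) ?_ h₁' h₂'
    simpa [← Bool.eq_not_of_ne ht] using hlt

theorem racCompatible_outerpathLine_of_side_eq_not {s t a : V} (hs : side a = !side s)
    {m m' : (ℝ × ℝ) × (ℝ × ℝ)} (hm : m ∈ (L.outerpathLine s t).segs)
    (h₁' : coord (side s) m'.1 = L.depth a) (h₂' : coord (side s) m'.2 = L.depth a) :
    RacCompatible m m' := by
  have hlt (r : V) : (L.track (side s) r : ℝ) < L.depth a := by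
    have := L.track_lt_depth a r
    rw [hs, Bool.not_not] at this
    exact_mod_cast this
  unfold outerpathLine at hm
  split_ifs at hm with ht <;> rcases Polyline.mem_segs_three.1 hm with rfl | rfl | rfl
  · exact .of_coord_lt (by simpa using hlt s) (by simpa using by linarith [hlt t]) h₁' h₂'
  · exact .of_coord_lt (by simpa using by linarith [hlt t]) (by simpa using by linarith [hlt t])
      h₁' h₂'
  · exact .of_coord_lt (by simpa using by linarith [hlt t]) (by simpa [← ht] using hlt t) h₁' h₂'
  · exact .of_coord_lt (by simpa using hlt s) (by simpa using hlt t) h₁' h₂'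
  · exact .of_coord_lt (by simpa using hlt t) (by simpa using hlt t) h₁' h₂'
  · exact .of_coord_eq (by rw [coord_not_gridPt, ← Bool.eq_not_of_ne ht, coord_side_pos])
      (h₁'.trans h₂'.symm)

theorem racCompatible_outerpathLine_matchingLine {s t v w : V} (hvw : cls v = cls w)
    {m m' : (ℝ × ℝ) × (ℝ × ℝ)} (hm : m ∈ (L.outerpathLine s t).segs)
    (hm' : m' ∈ (L.matchingLine v w).segs) : RacCompatible m m' := by
  obtain ⟨a, -, h₁, h₂, -⟩ := exists_depth_of_mem_matchingLine_segs hvw hm'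
  rcases Bool.eq_or_eq_not (side a) (side s) with hs | hs
  · rw [hs] at h₁ h₂
    exact racCompatible_outerpathLine_of_side_eq hs hm h₁ h₂
  · rw [hs, Bool.not_not] at h₁ h₂
    exact racCompatible_outerpathLine_of_side_eq_not hs hm h₁ h₂

theorem outerpathLine_first_last (s t : V) :
    (L.outerpathLine s t).first = L.pos s ∧ (L.outerpathLine s t).last = L.pos t := by
  unfold outerpathLine
  split_ifs <;> exact ⟨rfl, rfl⟩

theorem matchingLine_first_last (v w : V) :
    (L.matchingLine v w).first = L.pos v ∧ (L.matchingLine v w).last = L.pos w := by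
  unfold matchingLine
  split_ifs <;> exact ⟨rfl, rfl⟩

theorem outerpathLine_n (s t : V) : (L.outerpathLine s t).n = 3 := by
  unfold outerpathLine
  split_ifs <;> rfl

theorem matchingLine_n_le (v w : V) : (L.matchingLine v w).n ≤ 2 := by
  unfold matchingLine
  split_ifs <;> simp

theorem onGridPt_pos (v : V) : OnGridPt N N (L.pos v) := by
  have := L.one_le_track (!side v) v
  have := L.track_lt_depth v v
  exact onGridPt_gridPt _ (L.one_le_track _ _) (L.track_le _ _) (by omega) (L.depth_lt v).le

theorem onGridPt_outerpathLine {s t : V} (hst : s < t)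
    (k : Fin ((L.outerpathLine s t).n + 1)) : OnGridPt N N ((L.outerpathLine s t).pts k) := by
  have htrack := L.track_strictMono (side s) hst
  have hone := L.one_le_track (side s) s
  have hle := L.track_le (side s) t
  have hdepth (v : V) : 1 < L.depth v := (L.one_le_track _ v).trans_lt (L.track_lt_depth v v)
  have hs := hdepth s
  have ht := hdepth t
  have hs_lt := L.depth_lt s
  have ht_lt := L.depth_lt t
  revert k
  by_cases h : side t = side s
  · rw [outerpathLine, if_pos h]
    intro k
    fin_cases k
    · exact onGridPt_pos s
    · exact onGridPt_gridPt _ (by omega) (by omega) (by omega) (by omega)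
    · exact onGridPt_gridPt _ (by omega) (by omega) (by omega) (by omega)
    · exact onGridPt_pos t
  · rw [outerpathLine, if_neg h]
    intro k
    fin_cases k
    · exact onGridPt_pos s
    · exact onGridPt_gridPt _ (by omega) (by omega) (by omega) (by omega)
    · exact onGridPt_gridPt _ (by omega) (by omega) (L.one_le_track _ _) (L.track_le _ _)
    · exact onGridPt_pos t

theorem onGridPt_matchingLine (v w : V) (k : Fin ((L.matchingLine v w).n + 1)) :
    OnGridPt N N ((L.matchingLine v w).pts k) := by
  have hdepth (v : V) : 1 ≤ L.depth v := (L.one_le_track _ v).trans (L.track_lt_depth v v).le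
  revert k
  by_cases h : side v = side w
  · rw [matchingLine, if_pos h]
    intro k
    fin_cases k
    · exact onGridPt_pos v
    · exact onGridPt_pos w
  · rw [matchingLine, if_neg h]
    intro k
    fin_cases k
    · exact onGridPt_pos v
    · exact onGridPt_gridPt _ (hdepth w) (L.depth_lt w).le (hdepth v) (L.depth_lt v).le
    · exact onGridPt_pos w

variable (L) in
/-- The simultaneous drawing given by a layout, in which each outerpath edge is drawn from its
earlier to its later endpoint. -/
def drawing (Z M : SimpleGraph V) : SimDrawing ![Z, M] where
  pos := L.pos
  pos_injective := L.pos_injective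
  poly := ![fun e => L.outerpathLine e.inf e.sup, fun e => L.matchingLine e.inf e.sup]
  joins i a b _ := by
    fin_cases i <;> rcases le_total a b with h | h
    · exact Or.inl (by simpa [h] using outerpathLine_first_last a b)
    · exact Or.inr (by simpa [h] using outerpathLine_first_last b a)
    · exact Or.inl (by simpa [h] using matchingLine_first_last a b)
    · exact Or.inr (by simpa [h] using matchingLine_first_last b a)

variable {Z M : SimpleGraph V}

theorem planarEach_drawing [Finite V] (hZ : IsStripOrder Z side) (hM : IsMatchingGraph M)
    (hcls : IsMatchingClass M cls) : (L.drawing Z M).PlanarEach := by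
  intro i
  fin_cases i <;> rintro e he e' he' hne z ⟨hz, hz'⟩
  · obtain ⟨v, hv, hv', hzv⟩ := exists_eq_pos_of_mem_outerpathLine
      (hZ _ _ (adj_inf_sup he) (inf_lt_sup_of_mem_edgeSet he))
      (hZ _ _ (adj_inf_sup he') (inf_lt_sup_of_mem_edgeSet he'))
      (by rwa [mk_inf_sup, mk_inf_sup]) hz hz'
    rw [mk_inf_sup] at hv hv'
    exact ⟨v, hv, hv', hzv⟩
  · have hcls_ne : cls e.inf ≠ cls e'.inf := fun h => hne <| by
      rw [← mk_inf_sup e, ← mk_inf_sup e', hcls.edge_eq hM (adj_inf_sup he) (adj_inf_sup he') h]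
    exact (Set.disjoint_left.1 (disjoint_matchingLine_curve ((hcls _ _).2 (Or.inr (adj_inf_sup he)))
      ((hcls _ _).2 (Or.inr (adj_inf_sup he'))) hcls_ne) hz hz').elim

theorem isRacSim_drawing [Finite V] (hZ : IsStripOrder Z side) (hM : IsMatchingGraph M)
    (hcls : IsMatchingClass M cls) : (L.drawing Z M).IsRacSim :=
  SimDrawing.isRacSim_of_racCompatible (planarEach_drawing hZ hM hcls) fun _ _ _ he' _ hm _ hm' =>
    racCompatible_outerpathLine_matchingLine ((hcls _ _).2 (Or.inr (adj_inf_sup he'))) hm hm'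

theorem onGrid_drawing : (L.drawing Z M).OnGrid N N := by
  refine ⟨onGridPt_pos, fun i => ?_⟩
  fin_cases i
  · exact fun e he => onGridPt_outerpathLine (inf_lt_sup_of_mem_edgeSet he)
  · exact fun e _ => onGridPt_matchingLine _ _

theorem bendsAtMost_two_drawing : (L.drawing Z M).BendsAtMost 0 2 :=
  fun _ _ => (outerpathLine_n _ _).le

theorem bendsAtMost_one_drawing : (L.drawing Z M).BendsAtMost 1 1 :=
  fun _ _ => matchingLine_n_le _ _

end StripLayout

/-! ### A compact layout -/

section CompactLayout

open Finset

variable {V : Type} [Fintype V]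

theorem card_filter_lt_card_filter {P Q : V → Prop} [DecidablePred P] [DecidablePred Q]
    (hPQ : ∀ w, P w → Q w) {v : V} (hQ : Q v) (hP : ¬P v) : #{w | P w} < #{w | Q w} :=
  card_lt_card <| (ssubset_iff_of_subset (monotone_filter_right _ fun w _ => hPQ w)).2
    ⟨v, by simpa using hQ, by simpa using hP⟩

theorem card_side_add_card_side_not (side : V → Bool) (c : Bool) :
    #{w | side w = c} + #{w | side w = !c} = Fintype.card V := by
  simp only [Bool.eq_not]
  exact card_filter_add_card_filter_not _

theorem card_side_pos {side : V → Bool} (hside : Function.Surjective side) (c : Bool) :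
    0 < #{w | side w = c} := by
  obtain ⟨v, hv⟩ := hside c
  exact card_pos.2 ⟨v, by simpa using hv⟩

section Track

variable [LinearOrder V] (side : V → Bool) (c : Bool) {r t : V}

/-- The position of `v` in the order, with an additional unit of space before each vertex of the
side `c` except the first one; the truncated subtraction makes no difference before that vertex. -/
def compactTrack (v : V) : ℕ := #{w | w ≤ v} + (#{w | w ≤ v ∧ side w = c} - 1)

variable {side c}

theorem card_le_lt_card_le (hrt : r < t) : #{w | w ≤ r} < #{w | w ≤ t} :=
  card_filter_lt_card_filter (fun _ hw => hw.trans hrt.le) le_rfl hrt.not_ge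

theorem card_le_side_mono (hrt : r ≤ t) :
    #{w | w ≤ r ∧ side w = c} ≤ #{w | w ≤ t ∧ side w = c} :=
  card_le_card (monotone_filter_right _ fun _ _ hw => ⟨hw.1.trans hrt, hw.2⟩)

theorem card_le_side_lt_card_le_side (hrt : r < t) (ht : side t = c) :
    #{w | w ≤ r ∧ side w = c} < #{w | w ≤ t ∧ side w = c} :=
  card_filter_lt_card_filter (fun _ hw => ⟨hw.1.trans hrt.le, hw.2⟩) ⟨le_rfl, ht⟩
    fun h => hrt.not_ge h.1

theorem compactTrack_strictMono : StrictMono (compactTrack side c) := by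
  intro r t hrt
  have := card_le_lt_card_le hrt
  have := card_le_side_mono (side := side) (c := c) hrt.le
  unfold compactTrack
  omega

theorem compactTrack_add_two_le {s : V} (hs : side s = side t) (hst : s < t) (hrt : r < t) :
    compactTrack side (side t) r + 2 ≤ compactTrack side (side t) t := by
  have hpos : 0 < #{w | w ≤ s ∧ side w = side t} :=
    card_pos.2 ⟨s, by simpa using hs⟩
  have := card_le_lt_card_le hrt
  have := card_le_side_lt_card_le_side (side := side) hrt rfl
  have := card_le_side_lt_card_le_side (side := side) hst rfl
  unfold compactTrack
  omega

theorem one_le_compactTrack (v : V) : 1 ≤ compactTrack side c v :=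
  le_add_right (card_pos.2 ⟨v, by simp⟩)

theorem compactTrack_lt (hside : Function.Surjective side) (v : V) :
    compactTrack side c v < Fintype.card V + #{w | side w = c} := by
  have hall : #{w | w ≤ v} ≤ Fintype.card V := card_le_univ _
  have hc : #{w | w ≤ v ∧ side w = c} ≤ #{w | side w = c} :=
    card_le_card (monotone_filter_right _ fun _ _ hw => hw.2)
  have := card_side_pos hside c
  unfold compactTrack
  omega

end Track

variable (side : V → Bool) (cls : V → ℕ)

/-- The depth of `v`: beyond all tracks of the other side, two units per vertex of its own side
with a smaller matching class. -/
def compactDepth (v : V) : ℕ :=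
  Fintype.card V + #{w | side w = !side v} + 2 * #{w | side w = side v ∧ cls w < cls v}

variable {side cls}

theorem compactDepth_add_two_le {v w : V} (hs : side v = side w) (h : cls v < cls w) :
    compactDepth side cls v + 2 ≤ compactDepth side cls w := by
  have : #{u | side u = side w ∧ cls u < cls v} < #{u | side u = side w ∧ cls u < cls w} :=
    card_filter_lt_card_filter (fun _ hu => ⟨hu.1, hu.2.trans h⟩) ⟨hs, h⟩ fun hv => hv.2.false
  rw [compactDepth, compactDepth, hs]
  omega

theorem compactDepth_lt (hside : Function.Surjective side) (v : V) :
    compactDepth side cls v + 2 < 3 * Fintype.card V := by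
  have : #{w | side w = side v ∧ cls w < cls v} < #{w | side w = side v} :=
    card_filter_lt_card_filter (fun _ hw => hw.1) rfl fun hv => hv.2.false
  have := card_side_add_card_side_not side (side v)
  have := card_side_pos hside (!side v)
  unfold compactDepth
  omega

/-- The layout given by `compactTrack` and `compactDepth`, whose bounds are what limits the grid to
side length `3n - 2`. -/
def compactLayout [LinearOrder V] (hside : Function.Surjective side) :
    StripLayout side cls (3 * (Fintype.card V : ℤ) - 2) where
  track c v := compactTrack side c v
  depth v := compactDepth side cls v
  track_strictMono c := Nat.strictMono_cast.comp compactTrack_strictMono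
  track_add_two_le hs hst hrt := by exact_mod_cast compactTrack_add_two_le hs hst hrt
  track_lt_depth v w := by
    exact_mod_cast (compactTrack_lt hside w).trans_le (Nat.le_add_right _ _)
  depth_eq hs h := by simp only [compactDepth, hs, h]
  depth_add_two_le hs h := by exact_mod_cast compactDepth_add_two_le hs h
  one_le_track c v := by exact_mod_cast one_le_compactTrack v
  track_le c v := by
    have := compactTrack_lt hside (c := c) v
    have := card_side_add_card_side_not side c
    have := card_side_pos hside c
    have := card_side_pos hside (!c)
    omega
  depth_lt v := by
    have := compactDepth_lt hside (cls := cls) v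
    omega

end CompactLayout

/-- An outerpath and a matching on a common set of `n ≥ 4` vertices admit a RacSim
drawing on an integer grid of size `(3n - 2) × (3n - 2)` with at most two bends per
outerpath edge and at most one bend per matching edge. -/
theorem racsim_outerpath_matching {V : Type} [Fintype V] (n : ℕ)
    (hcard : Fintype.card V = n) (hn : 4 ≤ n) (Z M : SimpleGraph V)
    (hZ : IsOuterpath n Z) (hM : IsMatchingGraph M) :
    ∃ D : SimDrawing ![Z, M], D.IsRacSim ∧
      D.OnGrid (3 * (n : ℤ) - 2) (3 * (n : ℤ) - 2) ∧
      D.BendsAtMost 0 2 ∧ D.BendsAtMost 1 1 := by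
  subst hcard
  obtain ⟨side, rank, hside, hlayout⟩ := hZ.exists_isTrackLayout (by omega)
  obtain ⟨_, hstrip⟩ := hlayout.exists_isStripOrder
  obtain ⟨cls, hcls⟩ := hM.exists_isMatchingClass
  let L := compactLayout (cls := cls) hside
  exact ⟨L.drawing Z M, StripLayout.isRacSim_drawing hstrip hM hcls, StripLayout.onGrid_drawing,
    StripLayout.bendsAtMost_two_drawing, StripLayout.bendsAtMost_one_drawing⟩
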